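/- If U satisfies the Poincaré inequality with constant Λ, then the weighted measure π_h (the Gibbs measure e^{−βV} restricted and normalized on U_h) satisfies the Poincaré inequality ‖f − π_h[f]‖_{L²(π_h)} ≤ h Λ exp((β/2)(sup_{U_h} V − inf_{U_h} V)) ‖∇f‖_{L²(π_h)} for every weakly differentiable f : U_h → ℝ with ∇f ∈ L²(π_h). -/

import Mathlib

/-!
The variance `∫ (f - c)² dπ_h` is minimal at `c = π_h[f]` (`gibbs_variance_le`), so `π_h[f]` may be
replaced by the Lebesgue mean `c` over `U` of the rescaled function `g x = f (x₀ + h (x - x₀))`. On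
`U_h` the weight `e^{-βV}` lies between `e^{-β sup V}` and `e^{-β inf V}`, so dropping the weight on
the left and putting it back on the right costs the factor `e^{β (sup V - inf V)}`. The unweighted
inequality on `U_h` is the hypothesis on `U` applied to `g`: the Jacobian is the same on both sides,
and `‖∇g‖ = h ‖∇f‖` yields the factor `h`.

Bochner integrals of non-integrable functions are zero, so nothing has to be shown when
`(f - π_h[f])² e^{-βV}` is not integrable; otherwise `f ∈ L²(U_h)`, since the weight is bounded
below, and all integrals involved are genuine.
-/

open MeasureTheory

/-- The mean of `f` over a set `U` with respect to Lebesgue measure: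
`|U|⁻¹ ∫_U f dx`. -/
noncomputable def meanOn {d : ℕ} (U : Set (EuclideanSpace ℝ (Fin d)))
    (f : EuclideanSpace ℝ (Fin d) → ℝ) : ℝ :=
  ((volume U).toReal)⁻¹ * ∫ x in U, f x

/-- `U` satisfies the Poincaré inequality with constant `Λ`: for every differentiable
`f : U → ℝ` with `∇f ∈ L²(U)`, `‖f − |U|⁻¹∫_U f‖_{L²(U)} ≤ Λ ‖∇f‖_{L²(U)}`. -/
def SatisfiesPoincare {d : ℕ} (U : Set (EuclideanSpace ℝ (Fin d))) (Λ : ℝ) : Prop :=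
  ∀ f : EuclideanSpace ℝ (Fin d) → ℝ, DifferentiableOn ℝ f U →
    IntegrableOn (fun x => ‖fderiv ℝ f x‖ ^ 2) U volume →
    Real.sqrt (∫ x in U, (f x - meanOn U f) ^ 2) ≤
      Λ * Real.sqrt (∫ x in U, ‖fderiv ℝ f x‖ ^ 2)

/-- The normalizing constant `Z_h = ∫_{U_h} e^{−βV}` of the Gibbs measure on `U_h`. -/
noncomputable def gibbsZ {d : ℕ} (Uh : Set (EuclideanSpace ℝ (Fin d)))
    (V : EuclideanSpace ℝ (Fin d) → ℝ) (β : ℝ) : ℝ :=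
  ∫ x in Uh, Real.exp (-β * V x)

/-- The mean `π_h[f]` of `f` under the Gibbs measure `π_h ∝ 1_{U_h} e^{−βV} dx`. -/
noncomputable def gibbsMean {d : ℕ} (Uh : Set (EuclideanSpace ℝ (Fin d)))
    (V : EuclideanSpace ℝ (Fin d) → ℝ) (β : ℝ)
    (f : EuclideanSpace ℝ (Fin d) → ℝ) : ℝ :=
  (gibbsZ Uh V β)⁻¹ * ∫ x in Uh, f x * Real.exp (-β * V x)

/-- The mean minimizes the mean square deviation with respect to an unnormalized weight `W`. -/
theorem gibbs_variance_le {α : Type*} [MeasurableSpace α] {μ : Measure α} {f W : α → ℝ}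
    (c m : ℝ) (hW : Integrable W μ) (hfW : Integrable (fun x => f x * W x) μ)
    (hm : Integrable (fun x => (f x - m) ^ 2 * W x) μ)
    (hmean : ∫ x, f x * W x ∂μ = m * ∫ x, W x ∂μ) (hW0 : 0 ≤ ∫ x, W x ∂μ) :
    ∫ x, (f x - m) ^ 2 * W x ∂μ ≤ ∫ x, (f x - c) ^ 2 * W x ∂μ := by
  have e : ∀ x, (f x - c) ^ 2 * W x =
      (f x - m) ^ 2 * W x + (2 * (m - c) * (f x * W x) + (c ^ 2 - m ^ 2) * W x) :=
    fun x => by ring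
  have hi : Integrable (fun x => 2 * (m - c) * (f x * W x) + (c ^ 2 - m ^ 2) * W x) μ :=
    (hfW.const_mul _).add (hW.const_mul _)
  simp_rw [e]
  rw [integral_add hm hi,
    integral_add (hfW.const_mul _) (hW.const_mul _), integral_const_mul, integral_const_mul, hmean]
  nlinarith [mul_nonneg (sq_nonneg (m - c)) hW0]

/-- Poincaré inequality, in squared form, on the dilated set, with the mean replaced by some
constant. -/
theorem poincare_dilate {d : ℕ} {U : Set (EuclideanSpace ℝ (Fin d))}
    {x₀ : EuclideanSpace ℝ (Fin d)} (hUopen : IsOpen U)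
    {Λ : ℝ} (hP : SatisfiesPoincare U Λ) {h : ℝ} (hh : 0 < h)
    (hopen : IsOpen ((fun x => x₀ + h • (x - x₀)) '' U))
    (f : EuclideanSpace ℝ (Fin d) → ℝ)
    (hf : DifferentiableOn ℝ f ((fun x => x₀ + h • (x - x₀)) '' U))
    (hG : IntegrableOn (fun x => ‖fderiv ℝ f x‖ ^ 2) ((fun x => x₀ + h • (x - x₀)) '' U)) :
    ∃ c : ℝ, ∫ x in (fun x => x₀ + h • (x - x₀)) '' U, (f x - c) ^ 2 ≤
      (h * Λ) ^ 2 * ∫ x in (fun x => x₀ + h • (x - x₀)) '' U, ‖fderiv ℝ f x‖ ^ 2 := by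
  set T : EuclideanSpace ℝ (Fin d) → EuclideanSpace ℝ (Fin d) :=
    fun x => x₀ + h • (x - x₀) with hT
  set L : EuclideanSpace ℝ (Fin d) →L[ℝ] EuclideanSpace ℝ (Fin d) :=
    h • ContinuousLinearMap.id ℝ _ with hL
  have hTd : ∀ x, HasFDerivAt T L x := fun x =>
    (((hasFDerivAt_id x).sub_const x₀).const_smul h).const_add x₀
  have hinj : Function.Injective T := by
    intro x y hxy
    simpa [hT, hh.ne'] using hxy
  have hD : 0 < |L.det| := by
    rw [abs_pos, hL, ContinuousLinearMap.det]
    simp [hh.ne']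
  have hcv := fun g : EuclideanSpace ℝ (Fin d) → ℝ =>
    integral_image_eq_integral_abs_det_fderiv_smul volume hUopen.measurableSet
      (fun x _ => (hTd x).hasFDerivWithinAt) hinj.injOn g
  have hfd : ∀ x ∈ U, ‖fderiv ℝ (f ∘ T) x‖ ^ 2 = h ^ 2 * ‖fderiv ℝ f (T x)‖ ^ 2 := by
    intro x hx
    have h1 : DifferentiableAt ℝ f (T x) :=
      hf.differentiableAt (hopen.mem_nhds (Set.mem_image_of_mem T hx))
    have h2 := h1.hasFDerivAt.comp x (hTd x)
    rw [h2.fderiv]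
    have h3 : (fderiv ℝ f (T x)).comp L = h • fderiv ℝ f (T x) := by
      ext v; simp [hL]
    rw [h3, norm_smul, mul_pow, Real.norm_eq_abs, sq_abs]
  have hgd : DifferentiableOn ℝ (f ∘ T) U :=
    hf.comp (fun x _ => (hTd x).differentiableAt.differentiableWithinAt)
      (fun x hx => Set.mem_image_of_mem T hx)
  have hgi : IntegrableOn (fun x => ‖fderiv ℝ f (T x)‖ ^ 2) U := by
    have h1 := (integrableOn_image_iff_integrableOn_abs_det_fderiv_smul volume
      hUopen.measurableSet (fun x _ => (hTd x).hasFDerivWithinAt) hinj.injOn _).1 hG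
    simpa [IntegrableOn, smul_eq_mul, integrable_const_mul_iff (isUnit_iff_ne_zero.2 hD.ne')]
      using h1
  have hgi' : IntegrableOn (fun x => ‖fderiv ℝ (f ∘ T) x‖ ^ 2) U :=
    IntegrableOn.congr_fun (hgi.const_mul (h ^ 2)) (fun x hx => (hfd x hx).symm)
      hUopen.measurableSet
  have key := hP (f ∘ T) hgd hgi'
  refine ⟨meanOn U (f ∘ T), ?_⟩
  rw [hcv, hcv]
  simp_rw [smul_eq_mul]
  rw [integral_const_mul, integral_const_mul]
  rw [setIntegral_congr_fun hUopen.measurableSet hfd, integral_const_mul] at key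
  have hA : 0 ≤ ∫ x in U, ((f ∘ T) x - meanOn U (f ∘ T)) ^ 2 :=
    integral_nonneg fun x => sq_nonneg _
  have hB : 0 ≤ ∫ x in U, ‖fderiv ℝ f (T x)‖ ^ 2 := integral_nonneg fun x => sq_nonneg _
  have key2 := pow_le_pow_left₀ (Real.sqrt_nonneg _) key 2
  rw [mul_pow, Real.sq_sqrt hA, Real.sq_sqrt (by positivity)] at key2
  have := mul_le_mul_of_nonneg_left key2 hD.le
  calc _ ≤ _ := this
    _ = _ := by ring

/-- if `U` satisfies the Poincaré inequality with constant `Λ`, then the Gibbs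
measure `π_h ∝ e^{−βV}` on the dilated set `U_h = x₀ + h(U − x₀)` satisfies
`‖f − π_h[f]‖_{L²(π_h)} ≤ h Λ exp((β/2)(sup_{U_h} V − inf_{U_h} V)) ‖∇f‖_{L²(π_h)}`
for every differentiable `f` with `∇f ∈ L²(π_h)`. -/
theorem poincare_gibbs {d : ℕ} (U : Set (EuclideanSpace ℝ (Fin d)))
    (x₀ : EuclideanSpace ℝ (Fin d))
    (hUopen : IsOpen U) (hUbdd : Bornology.IsBounded U) (hUpos : 0 < volume U)
    (Λ : ℝ) (hΛ : 0 < Λ) (hP : SatisfiesPoincare U Λ)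
    (h : ℝ) (hh : 0 < h)
    (V : EuclideanSpace ℝ (Fin d) → ℝ) (hV : Continuous V) (β : ℝ) (hβ : 0 < β) :
    ∀ f : EuclideanSpace ℝ (Fin d) → ℝ,
      DifferentiableOn ℝ f ((fun x => x₀ + h • (x - x₀)) '' U) →
      IntegrableOn (fun x => ‖fderiv ℝ f x‖ ^ 2 * Real.exp (-β * V x))
        ((fun x => x₀ + h • (x - x₀)) '' U) volume →
      Real.sqrt ((gibbsZ ((fun x => x₀ + h • (x - x₀)) '' U) V β)⁻¹ *
          ∫ x in (fun x => x₀ + h • (x - x₀)) '' U,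
            (f x - gibbsMean ((fun x => x₀ + h • (x - x₀)) '' U) V β f) ^ 2 *
              Real.exp (-β * V x)) ≤
        h * Λ *
          Real.exp ((β / 2) *
            (sSup (V '' ((fun x => x₀ + h • (x - x₀)) '' U)) -
              sInf (V '' ((fun x => x₀ + h • (x - x₀)) '' U)))) *
          Real.sqrt ((gibbsZ ((fun x => x₀ + h • (x - x₀)) '' U) V β)⁻¹ *
            ∫ x in (fun x => x₀ + h • (x - x₀)) '' U,
              ‖fderiv ℝ f x‖ ^ 2 * Real.exp (-β * V x)) := by
  intro f hf hfi
  set Uh := (fun x => x₀ + h • (x - x₀)) '' U with hUh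
  have hopen : IsOpen Uh := by
    have : Uh = ((Homeomorph.subRight x₀).trans ((Homeomorph.smulOfNeZero h hh.ne').trans
        (Homeomorph.addLeft x₀))) '' U := rfl
    rw [this]
    exact (Homeomorph.isOpenMap _) U hUopen
  have hTc : Continuous (fun x : EuclideanSpace ℝ (Fin d) => x₀ + h • (x - x₀)) := by fun_prop
  -- `U_h` lies in the compact image of `closure U`, on which `V` is bounded.
  have hK : IsCompact ((fun x => x₀ + h • (x - x₀)) '' closure U) :=
    hUbdd.isCompact_closure.image hTc
  have hsub : Uh ⊆ (fun x => x₀ + h • (x - x₀)) '' closure U := Set.image_mono subset_closure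
  have hVab : BddAbove (V '' Uh) := (hK.image hV).bddAbove.mono (Set.image_mono hsub)
  have hVbe : BddBelow (V '' Uh) := (hK.image hV).bddBelow.mono (Set.image_mono hsub)
  have hms : MeasurableSet Uh := hopen.measurableSet
  have hfin : volume Uh < ⊤ := (measure_mono hsub).trans_lt hK.measure_lt_top
  have hne : U.Nonempty := nonempty_of_measure_ne_zero hUpos.ne'
  have hvpos : 0 < volume Uh := hopen.measure_pos volume (hne.image _)
  have : IsFiniteMeasure (volume.restrict Uh) := ⟨by simpa using hfin⟩
  set S := sSup (V '' Uh) with hS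
  set I := sInf (V '' Uh) with hI
  set W : EuclideanSpace ℝ (Fin d) → ℝ := fun x => Real.exp (-β * V x) with hW
  have hWc : Continuous W := by fun_prop
  have hWle : ∀ x ∈ Uh, W x ≤ Real.exp (-β * I) := fun x hx => by
    have := csInf_le hVbe (Set.mem_image_of_mem V hx)
    exact Real.exp_le_exp.2 (by nlinarith)
  have hWge : ∀ x ∈ Uh, Real.exp (-β * S) ≤ W x := fun x hx => by
    have := le_csSup hVab (Set.mem_image_of_mem V hx)
    exact Real.exp_le_exp.2 (by nlinarith)
  have hWpos : ∀ x, 0 < W x := fun x => Real.exp_pos _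
  have mulW : ∀ g : EuclideanSpace ℝ (Fin d) → ℝ, IntegrableOn g Uh →
      IntegrableOn (fun x => g x * W x) Uh := fun g hg =>
    Integrable.mul_bdd (c := Real.exp (-β * I)) hg hWc.aestronglyMeasurable
      ((ae_restrict_iff' hms).2 (Filter.Eventually.of_forall fun x hx => by
        rw [Real.norm_of_nonneg (hWpos x).le]; exact hWle x hx))
  have divW : ∀ g : EuclideanSpace ℝ (Fin d) → ℝ, IntegrableOn (fun x => g x * W x) Uh →
      IntegrableOn g Uh := fun g hg => by
    have h1 : IntegrableOn (fun x => g x * W x * (W x)⁻¹) Uh :=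
      Integrable.mul_bdd (c := (Real.exp (-β * S))⁻¹) hg
        (hWc.inv₀ fun x => (hWpos x).ne').aestronglyMeasurable
        ((ae_restrict_iff' hms).2 (Filter.Eventually.of_forall fun x hx => by
          rw [Real.norm_of_nonneg (inv_pos.2 (hWpos x)).le]
          exact inv_anti₀ (Real.exp_pos _) (hWge x hx)))
    refine h1.congr (Filter.Eventually.of_forall fun x => ?_)
    exact mul_inv_cancel_right₀ (hWpos x).ne' _
  have hWi : IntegrableOn W Uh := by
    simpa using mulW (fun _ => 1) (integrable_const 1)
  have hZ : 0 < gibbsZ Uh V β := by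
    refine (setIntegral_pos_iff_support_of_nonneg_ae
      (Filter.Eventually.of_forall fun x => (hWpos x).le) hWi).2 ?_
    have : Function.support W = Set.univ := by
      ext x; simp [(hWpos x).ne']
    rwa [this, Set.univ_inter]
  set m := gibbsMean Uh V β f with hm
  have hfG : IntegrableOn (fun x => ‖fderiv ℝ f x‖ ^ 2) Uh := divW _ hfi
  obtain ⟨c, hc⟩ := poincare_dilate hUopen hP hh hopen f hf hfG
  have hGW : 0 ≤ ∫ x in Uh, ‖fderiv ℝ f x‖ ^ 2 * W x :=
    integral_nonneg fun x => mul_nonneg (sq_nonneg _) (hWpos x).le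
  have main : ∫ x in Uh, (f x - m) ^ 2 * W x ≤
      (h * Λ) ^ 2 * Real.exp (β * (S - I)) * ∫ x in Uh, ‖fderiv ℝ f x‖ ^ 2 * W x := by
    by_cases hint : IntegrableOn (fun x => (f x - m) ^ 2 * W x) Uh
    swap
    · rw [integral_undef hint]
      positivity
    have hfm : AEStronglyMeasurable f (volume.restrict Uh) :=
      hf.continuousOn.aestronglyMeasurable hms
    have hL2 : MemLp (fun x => f x - m) 2 (volume.restrict Uh) :=
      (memLp_two_iff_integrable_sq (hfm.sub aestronglyMeasurable_const)).2 (divW _ hint)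
    have hfL2 : MemLp f 2 (volume.restrict Uh) := by
      refine (hL2.add (memLp_const m)).ae_eq (Filter.Eventually.of_forall fun x => ?_)
      exact sub_add_cancel (f x) m
    have hfc : IntegrableOn (fun x => (f x - c) ^ 2) Uh :=
      (hfL2.sub (memLp_const c)).integrable_sq
    have hfWi : IntegrableOn (fun x => f x * W x) Uh := mulW f (hfL2.integrable one_le_two)
    have h1 : ∫ x in Uh, (f x - m) ^ 2 * W x ≤ ∫ x in Uh, (f x - c) ^ 2 * W x := by
      refine gibbs_variance_le c m hWi hfWi hint ?_ hZ.le
      change _ = (gibbsZ Uh V β)⁻¹ * (∫ x in Uh, f x * W x) * gibbsZ Uh V β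
      field_simp
    have h2 : ∫ x in Uh, (f x - c) ^ 2 * W x ≤
        Real.exp (-β * I) * ∫ x in Uh, (f x - c) ^ 2 := by
      rw [← integral_const_mul]
      refine setIntegral_mono_on (mulW _ hfc) (hfc.const_mul _) hms fun x hx => ?_
      rw [mul_comm]
      exact mul_le_mul_of_nonneg_right (hWle x hx) (sq_nonneg _)
    have h3 : ∫ x in Uh, ‖fderiv ℝ f x‖ ^ 2 ≤
        Real.exp (β * S) * ∫ x in Uh, ‖fderiv ℝ f x‖ ^ 2 * W x := by
      rw [← integral_const_mul]
      refine setIntegral_mono_on hfG (hfi.const_mul _) hms fun x hx => ?_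
      have h4 : 1 ≤ Real.exp (β * S) * W x := by
        calc (1 : ℝ) = Real.exp (β * S) * Real.exp (-β * S) := by
              rw [← Real.exp_add]; simp
          _ ≤ _ := mul_le_mul_of_nonneg_left (hWge x hx) (Real.exp_pos _).le
      nlinarith [mul_le_mul_of_nonneg_left h4 (sq_nonneg ‖fderiv ℝ f x‖)]
    have hexp : Real.exp (β * (S - I)) = Real.exp (-β * I) * Real.exp (β * S) := by
      rw [← Real.exp_add]; ring_nf
    calc _ ≤ _ := h1.trans h2
      _ ≤ Real.exp (-β * I) * ((h * Λ) ^ 2 *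
          (Real.exp (β * S) * ∫ x in Uh, ‖fderiv ℝ f x‖ ^ 2 * W x)) := by
        gcongr
        exact hc.trans (by gcongr)
      _ = _ := by rw [hexp]; ring
  have hsq : Real.exp (β * (S - I)) = Real.exp (β / 2 * (S - I)) ^ 2 := by
    rw [← Real.exp_nat_mul]; congr 1; push_cast; ring
  refine Real.sqrt_le_iff.2 ⟨by positivity, ?_⟩
  rw [mul_pow, Real.sq_sqrt (mul_nonneg (inv_pos.2 hZ).le hGW)]
  calc _ ≤ (gibbsZ Uh V β)⁻¹ * _ := mul_le_mul_of_nonneg_left main (inv_pos.2 hZ).le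
    _ = _ := by rw [hsq]; ring
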